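/- arXiv:1610.00817 — 5 statements merged into one kernel-verified Lean document; each statement's English description precedes it below -/
import Mathlib

section
/- Let f : ℂ ∖ L → ℂ be holomorphic and doubly periodic. Suppose that f has at worst a simple pole at 0, i.e. there exist ε > 0 with the punctured ball B(0,ε) ∖ {0} contained in ℂ ∖ L and a holomorphic function g on B(0,ε) such that g(z) = z·f(z) for all z ∈ B(0,ε) ∖ {0}. Then f is constant. (This is the fact, used repeatedly in the paper, that there is no elliptic function of order 1.) -/
open Metric Filter

open scoped Topology

lemma aux_per (P : PeriodPair) (f : ℂ → ℂ) (c : ℂ)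
    (h1 : ∀ z ∉ P.lattice, f (z + P.ω₁) = f z) (h2 : ∀ z ∉ P.lattice, f (z + P.ω₂) = f z)
    (e : ℂ → ℂ) (he0 : ∀ z ∈ P.lattice, e z = c) (he1 : ∀ z ∉ P.lattice, e z = f z) :
    ∀ z, ∀ l ∈ P.lattice, e (z + l) = e z := by
  have key : ∀ t ∈ P.lattice, (∀ z ∉ P.lattice, f (z + t) = f z) → Function.Periodic e t := by
    intro t ht hft z
    by_cases hz : z ∈ P.lattice
    · rw [he0 _ hz, he0 _ (add_mem hz ht)]
    · rw [he1 _ hz, he1 _ (by rwa [Submodule.add_mem_iff_left _ ht]), hft z hz]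
  have k1 := key _ P.ω₁_mem_lattice h1
  have k2 := key _ P.ω₂_mem_lattice h2
  intro z l hl
  obtain ⟨m, n, rfl⟩ := PeriodPair.mem_lattice.mp hl
  exact ((k1.int_mul m).add_period (k2.int_mul n)) z

lemma aux_per' (P : PeriodPair) (f : ℂ → ℂ)
    (h1 : ∀ z ∉ P.lattice, f (z + P.ω₁) = f z) (h2 : ∀ z ∉ P.lattice, f (z + P.ω₂) = f z) :
    ∀ z ∉ P.lattice, ∀ l ∈ P.lattice, f (z + l) = f z := by
  classical
  intro z hz l hl
  have := aux_per P f 0 h1 h2 (fun z => if z ∈ P.lattice then 0 else f z)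
    (fun z hz => if_pos hz) (fun z hz => if_neg hz) z l hl
  simpa [hz, Submodule.add_mem_iff_left _ hl] using this

lemma aux_near (P : PeriodPair) : ∀ᶠ z in 𝓝[≠] (0 : ℂ), z ∉ P.lattice := by
  have := P.compl_lattice_sdiff_singleton_mem_nhds 0
  rw [eventually_nhdsWithin_iff]
  filter_upwards [this] with z hz hz0 hzl
  exact hz ⟨hzl, hz0⟩

lemma aux_liouville (P : PeriodPair) (f : ℂ → ℂ)
    (hf : DifferentiableOn ℂ f (P.lattice : Set ℂ)ᶜ)
    (h1 : ∀ z ∉ P.lattice, f (z + P.ω₁) = f z) (h2 : ∀ z ∉ P.lattice, f (z + P.ω₂) = f z)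
    (h : ℂ → ℂ) (hh : AnalyticAt ℂ h 0) (h0 : h 0 = 0)
    (hfh : ∀ᶠ z in 𝓝[≠] (0 : ℂ), h z = z * f z) :
    ∀ z ∉ P.lattice, ∀ w ∉ P.lattice, f z = f w := by
  classical
  obtain ⟨p, hp⟩ := hh
  have hd : AnalyticAt ℂ (dslope h 0) 0 := ⟨_, hp.has_fpower_series_dslope_fslope⟩
  set e : ℂ → ℂ := fun z => if z ∈ P.lattice then dslope h 0 0 else f z with he
  have he0 : ∀ z ∈ P.lattice, e z = dslope h 0 0 := fun z hz => if_pos hz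
  have he1 : ∀ z ∉ P.lattice, e z = f z := fun z hz => if_neg hz
  have hper := aux_per P f _ h1 h2 e he0 he1
  have hd0 : DifferentiableAt ℂ e 0 := by
    refine hd.differentiableAt.congr_of_eventuallyEq ?_
    have := hfh.and (aux_near P)
    rw [eventually_nhdsWithin_iff] at this
    filter_upwards [this] with z hz
    by_cases hz0 : z = 0
    · subst hz0; exact he0 _ (zero_mem _)
    · obtain ⟨ha, hb⟩ := hz hz0
      rw [he1 _ hb, dslope_of_ne _ hz0, slope_def_field, h0, ha]
      field_simp
      simp
  have hdiff : Differentiable ℂ e := by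
    intro z
    by_cases hz : z ∈ P.lattice
    · have : e = fun w => e (w - z) := by
        funext w
        have := hper (w - z) z hz
        simpa using this
      rw [this]
      apply DifferentiableAt.comp z (g := e) (f := fun w => w - z)
      · simpa using hd0
      · fun_prop
    · have ho : (P.lattice : Set ℂ)ᶜ ∈ 𝓝 z := P.isClosed_lattice.isOpen_compl.mem_nhds hz
      refine (hf.differentiableAt ho).congr_of_eventuallyEq ?_
      filter_upwards [ho] with w hw using he1 w hw
  have hb := (IsZLattice.isCompact_range_of_periodic P.lattice e hdiff.continuous
    (fun z w hw => hper z w hw)).isBounded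
  intro z hz w hw
  rw [← he1 z hz, ← he1 w hw]
  exact hdiff.apply_eq_apply_of_bounded hb z w

lemma aux_main (P : PeriodPair) (f : ℂ → ℂ)
    (hf : DifferentiableOn ℂ f (P.lattice : Set ℂ)ᶜ)
    (h1 : ∀ z ∉ P.lattice, f (z + P.ω₁) = f z) (h2 : ∀ z ∉ P.lattice, f (z + P.ω₂) = f z)
    (g : ℂ → ℂ) (hg : AnalyticAt ℂ g 0)
    (hfg : ∀ᶠ z in 𝓝[≠] (0 : ℂ), g z = z * f z) :
    ∀ z ∉ P.lattice, ∀ w ∉ P.lattice, f z = f w := by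
  have hper := aux_per' P f h1 h2
  by_cases hc : g 0 = 0
  · exact aux_liouville P f hf h1 h2 g hg hc hfg
  exfalso
  have hnear := aux_near P
  have hneg : Tendsto (fun z : ℂ => -z) (𝓝[≠] 0) (𝓝[≠] 0) := by
    refine tendsto_nhdsWithin_iff.mpr ⟨?_, ?_⟩
    · have : Tendsto (fun z : ℂ => -z) (𝓝 0) (𝓝 (-0)) := continuous_neg.tendsto 0
      rw [neg_zero] at this
      exact this.mono_left nhdsWithin_le_nhds
    · filter_upwards [self_mem_nhdsWithin] with z hz
      simpa using hz
  have hopen := P.isClosed_lattice.isOpen_compl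
  -- even part is constant
  have heven := aux_liouville P (fun z => f z + f (-z))
    (hf.add (hf.comp (by fun_prop) (fun z hz => by simpa using hz)))
    (fun z hz => by
      have : f (-(z + P.ω₁)) = f (-z) := by
        have := hper (-z) (by simpa using hz) (-P.ω₁) (by simpa using P.ω₁_mem_lattice)
        rw [← this]; ring_nf
      simp only [this, h1 z hz])
    (fun z hz => by
      have : f (-(z + P.ω₂)) = f (-z) := by
        have := hper (-z) (by simpa using hz) (-P.ω₂) (by simpa using P.ω₂_mem_lattice)
        rw [← this]; ring_nf
      simp only [this, h2 z hz])
    (fun z => g z - g (-z))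
    (hg.sub (AnalyticAt.fun_comp (g := g) (by simpa using hg) analyticAt_id.neg)) (by simp)
    (by
      filter_upwards [hfg, hneg.eventually hfg] with z hz hz'
      rw [hz, hz']; ring)
  set k : ℂ := f (P.ω₁ / 2) with hk
  have ha1 := P.ω₁_div_two_notMem_lattice
  have hodd : ∀ z ∉ P.lattice, f z + f (-z) = 2 * k := by
    intro z hz
    have := heven z hz _ ha1
    rw [this]
    have h := h1 (-(P.ω₁ / 2)) (by simpa using ha1)
    rw [← h, show -(P.ω₁ / 2) + P.ω₁ = P.ω₁ / 2 by ring]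
    ring
  have ha2 := P.ω₂_div_two_notMem_lattice
  have hk2 : f (P.ω₂ / 2) = k := by
    have h := h2 (-(P.ω₂ / 2)) (by simpa using ha2)
    rw [show -(P.ω₂ / 2) + P.ω₂ = P.ω₂ / 2 by ring] at h
    have := hodd _ ha2
    rw [← h] at this
    linear_combination this / 2
  -- the finer lattice
  let Q : PeriodPair := ⟨P.ω₁, P.ω₂ / 2, by
    have := P.indep
    rw [LinearIndependent.pair_iff] at this ⊢
    intro s t hst
    have := this s (t / 2) (by
      rw [← hst]; simp only [Complex.real_smul]; push_cast; ring)
    exact ⟨this.1, by linarith [this.2]⟩⟩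
  have hPQ : ∀ z, z ∈ P.lattice → z ∈ Q.lattice := by
    intro z hz
    obtain ⟨m, n, rfl⟩ := PeriodPair.mem_lattice.mp hz
    exact PeriodPair.mem_lattice.mpr ⟨m, 2 * n, by simp only [Q]; push_cast; ring⟩
  have hQ2 : P.ω₂ / 2 ∈ Q.lattice := Q.ω₂_mem_lattice
  have hQs : ∀ z, z ∉ Q.lattice → z + P.ω₂ / 2 ∉ P.lattice := fun z hz hz' => hz (by
    have := sub_mem (hPQ _ hz') hQ2
    simpa using this)
  have hQ : ∀ z, z ∉ Q.lattice → z ∉ P.lattice := fun z hz hz' => hz (hPQ _ hz')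
  have hshift : AnalyticAt ℂ (fun z => f (z + P.ω₂ / 2)) 0 := by
    have : AnalyticAt ℂ f (0 + P.ω₂ / 2) := by
      rw [zero_add]; exact hf.analyticAt (hopen.mem_nhds ha2)
    exact AnalyticAt.fun_comp (g := f) this (by fun_prop)
  have hG := aux_liouville Q (fun z => (f z - k) * (f (z + P.ω₂ / 2) - k))
    (by
      refine DifferentiableOn.mul ((hf.mono fun z hz => hQ z hz).sub_const k) ?_
      exact (hf.comp (by fun_prop) (fun z hz => hQs z hz)).sub_const k)
    (fun z hz => by
      have e1 : f (z + P.ω₁) = f z := h1 z (hQ z hz)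
      have e2 : f (z + P.ω₁ + P.ω₂ / 2) = f (z + P.ω₂ / 2) := by
        rw [← h1 _ (hQs z hz)]; ring_nf
      simp only [Q, e1, e2])
    (fun z hz => by
      have e2 : f (z + P.ω₂ / 2 + P.ω₂ / 2) = f z := by
        rw [← h2 _ (hQ z hz)]; ring_nf
      simp only [Q, e2]; ring)
    (fun z => (g z - z * k) * (f (z + P.ω₂ / 2) - k))
    ((hg.sub (analyticAt_id.mul analyticAt_const)).mul (hshift.sub analyticAt_const))
    (by simp [hk2])
    (by
      filter_upwards [hfg] with z hz
      rw [hz]; ring)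
  have hG0 : ∀ z ∉ Q.lattice, (f z - k) * (f (z + P.ω₂ / 2) - k) = 0 := by
    intro z hz
    have := hG z hz (P.ω₁ / 2) Q.ω₁_div_two_notMem_lattice
    rw [this]
    simp [hk]
  have hne : ∀ᶠ z in 𝓝[≠] (0 : ℂ), f z - k ≠ 0 := by
    have hcont : ContinuousAt (fun z => g z - z * k) 0 := by
      have := hg.continuousAt
      fun_prop
    have h3 : ∀ᶠ z in 𝓝 (0 : ℂ), g z - z * k ≠ 0 :=
      hcont.eventually_ne (by simpa using hc)
    filter_upwards [hfg, h3.filter_mono nhdsWithin_le_nhds] with z hz hz' h4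
    apply hz'
    rw [hz]; linear_combination z * h4
  have hz2 : ∀ᶠ z in 𝓝[≠] (0 : ℂ), f (z + P.ω₂ / 2) - k = 0 := by
    filter_upwards [hne, aux_near Q] with z hz hzQ
    exact (mul_eq_zero.mp (hG0 z hzQ)).resolve_left hz
  have hz3 : ∃ᶠ z in 𝓝[≠] (P.ω₂ / 2), f z - k = 0 := by
    have ht : Tendsto (fun z : ℂ => z + P.ω₂ / 2) (𝓝[≠] 0) (𝓝[≠] (P.ω₂ / 2)) := by
      refine tendsto_nhdsWithin_iff.mpr ⟨?_, ?_⟩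
      · have : Tendsto (fun z : ℂ => z + P.ω₂ / 2) (𝓝 0) (𝓝 (0 + P.ω₂ / 2)) :=
          (continuous_id.add continuous_const).tendsto 0
        rw [zero_add] at this
        exact this.mono_left nhdsWithin_le_nhds
      · filter_upwards [self_mem_nhdsWithin] with z hz
        simpa using hz
    exact ht.frequently hz2.frequently
  have hcount : (P.lattice : Set ℂ).Countable := by
    have : (P.lattice : Set ℂ) = Set.range (fun x : ℤ × ℤ => (x.1 : ℂ) * P.ω₁ + x.2 * P.ω₂) := by
      ext z
      simp [PeriodPair.mem_lattice]
    rw [this]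
    exact Set.countable_range _
  have hconn : IsPreconnected (P.lattice : Set ℂ)ᶜ :=
    (hcount.isPathConnected_compl_of_one_lt_rank (by simp)).isConnected.isPreconnected
  have hzero := ((hf.sub_const k).analyticOnNhd hopen).eqOn_zero_of_preconnected_of_frequently_eq_zero
    hconn ha2 hz3
  obtain ⟨z, hz, hz'⟩ := (hne.and hnear).exists
  exact hz (hzero hz')



/-- There is no elliptic function of order 1: a doubly periodic function, holomorphic
off the lattice `L`, with at worst a simple pole at `0`, is constant. -/
theorem no_elliptic_function_of_order_one
    (ω : ℂ) (hω : 0 < ω.im)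
    (L : Set ℂ) (hL : L = {z : ℂ | ∃ m n : ℤ, z = (m : ℂ) + (n : ℂ) * ω})
    (f : ℂ → ℂ)
    (hf : DifferentiableOn ℂ f Lᶜ)
    (hper : ∀ z ∉ L, f (z + 1) = f z ∧ f (z + ω) = f z)
    (hpole : ∃ ε > 0, (ball (0 : ℂ) ε \ {0}) ⊆ Lᶜ ∧
      ∃ g : ℂ → ℂ, DifferentiableOn ℂ g (ball (0 : ℂ) ε) ∧
        ∀ z ∈ ball (0 : ℂ) ε \ {0}, g z = z * f z) :
    ∀ z ∉ L, ∀ w ∉ L, f z = f w := by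
  let P : PeriodPair := ⟨1, ω, by
    rw [LinearIndependent.pair_iff]
    intro s t hst
    have him := congrArg Complex.im hst
    have hre := congrArg Complex.re hst
    simp at him hre
    have ht : t = 0 := him.resolve_right hω.ne'
    subst ht
    simpa using hre⟩
  have hLP : L = (P.lattice : Set ℂ) := by
    rw [hL]
    ext z
    simp only [Set.mem_ofPred_eq, SetLike.mem_coe, PeriodPair.mem_lattice, P, mul_one]
    exact exists_congr fun m => exists_congr fun n => eq_comm
  subst hLP
  obtain ⟨ε, hε, -, g, hg, hgf⟩ := hpole
  refine aux_main P f hf (fun z hz => (hper z hz).1) (fun z hz => (hper z hz).2) g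
    (hg.analyticAt (ball_mem_nhds 0 hε)) ?_
  rw [eventually_nhdsWithin_iff]
  filter_upwards [ball_mem_nhds (0 : ℂ) hε] with z hz hz0
  exact hgf z ⟨hz, hz0⟩
end

section
/- For every integer n ≥ 2 there exists a holomorphic doubly periodic function f : ℂ ∖ L → ℂ such that zⁿ·f(z) → 1 as z → 0 with z ∈ ℂ ∖ L. (In the paper such functions are realized as normalized derivatives ℘^{(n−2)} of the Weierstrass ℘-function with periods (1, ω); they have a pole of exact order n at each lattice point and no other poles.) -/
open Metric Filter

theorem aux_tendsto_P (P : PeriodPair) :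
    Tendsto (fun z => z ^ 2 * P.weierstrassP z) (nhdsWithin 0 {0}ᶜ) (nhds 1) := by
  have h1 : ContinuousAt (P.weierstrassPExcept 0) 0 :=
    (P.analyticAt_weierstrassPExcept 0).continuousAt
  have h2 : Tendsto (fun z => z ^ 2 * P.weierstrassPExcept 0 z + 1) (nhdsWithin 0 {0}ᶜ) (nhds 1) := by
    have : ContinuousAt (fun z => z ^ 2 * P.weierstrassPExcept 0 z + 1) 0 := by fun_prop
    have h3 := this.tendsto
    simp only [ne_eq, OfNat.ofNat_ne_zero, not_false_eq_true, zero_pow, zero_mul, zero_add] at h3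
    exact h3.mono_left nhdsWithin_le_nhds
  refine h2.congr' ?_
  filter_upwards [self_mem_nhdsWithin] with z hz
  have hz : z ≠ 0 := hz
  have := P.weierstrassPExcept_add 0 z
  simp at this
  rw [← this]
  field_simp

theorem aux_tendsto_P' (P : PeriodPair) :
    Tendsto (fun z => z ^ 3 * (- P.derivWeierstrassP z / 2)) (nhdsWithin 0 {0}ᶜ) (nhds 1) := by
  have h1 : ContinuousAt (P.derivWeierstrassPExcept 0) 0 :=
    (P.analyticAt_derivWeierstrassPExcept 0).continuousAt
  have h2 : Tendsto (fun z => z ^ 3 * (- P.derivWeierstrassPExcept 0 z / 2) + 1)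
      (nhdsWithin 0 {0}ᶜ) (nhds 1) := by
    have : ContinuousAt (fun z => z ^ 3 * (- P.derivWeierstrassPExcept 0 z / 2) + 1) 0 := by
      fun_prop
    have h3 := this.tendsto
    simp only [ne_eq, OfNat.ofNat_ne_zero, not_false_eq_true, zero_pow, zero_mul, zero_add] at h3
    exact h3.mono_left nhdsWithin_le_nhds
  refine h2.congr' ?_
  filter_upwards [self_mem_nhdsWithin] with z hz
  have hz : z ≠ 0 := hz
  have := P.derivWeierstrassPExcept_sub 0 z
  simp at this
  rw [← this]
  field_simp
  ring

/-- For every `n ≥ 2` there is a doubly periodic function, holomorphic off the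
lattice `L`, with `z ^ n * f z → 1` as `z → 0` off `L` (realized by normalized
derivatives of the Weierstrass ℘-function). -/
theorem exists_elliptic_function_of_order_ge_two
    (ω : ℂ) (hω : 0 < ω.im)
    (L : Set ℂ) (hL : L = {z : ℂ | ∃ m n : ℤ, z = (m : ℂ) + (n : ℂ) * ω})
    (n : ℕ) (hn : 2 ≤ n) :
    ∃ f : ℂ → ℂ, DifferentiableOn ℂ f Lᶜ ∧
      (∀ z ∉ L, f (z + 1) = f z ∧ f (z + ω) = f z) ∧
      Tendsto (fun z => z ^ n * f z) (nhdsWithin 0 Lᶜ) (nhds 1) := by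
  have hind : LinearIndependent ℝ ![(1 : ℂ), ω] := by
    rw [LinearIndependent.pair_iff]
    intro s t h
    have h1 := congrArg Complex.im h
    have h2 := congrArg Complex.re h
    simp at h1 h2
    rcases h1 with h1 | h1
    · subst h1
      simpa using h2
    · exact absurd h1 hω.ne'
  let P : PeriodPair := ⟨1, ω, hind⟩
  have hLP : L = (P.lattice : Set ℂ) := by
    rw [hL]
    ext z
    simp only [Set.mem_setOf_eq, SetLike.mem_coe, PeriodPair.mem_lattice, P, mul_one]
    simp only [eq_comm]
  have h0 : (0 : ℂ) ∈ L := by rw [hLP]; exact P.lattice.zero_mem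
  have hle : nhdsWithin (0 : ℂ) Lᶜ ≤ nhdsWithin 0 {0}ᶜ :=
    nhdsWithin_mono _ (by simpa using h0)
  have t1 := (aux_tendsto_P P).mono_left hle
  have t2 := (aux_tendsto_P' P).mono_left hle
  have d1 : DifferentiableOn ℂ P.weierstrassP Lᶜ := by
    rw [hLP]; exact P.differentiableOn_weierstrassP
  have d2 : DifferentiableOn ℂ P.derivWeierstrassP Lᶜ := by
    rw [hLP]; exact P.differentiableOn_derivWeierstrassP
  have p1 : ∀ z, P.weierstrassP (z + 1) = P.weierstrassP z :=
    fun z => P.weierstrassP_add_coe z ⟨1, P.ω₁_mem_lattice⟩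
  have p2 : ∀ z, P.weierstrassP (z + ω) = P.weierstrassP z :=
    fun z => P.weierstrassP_add_coe z ⟨ω, P.ω₂_mem_lattice⟩
  have q1 : ∀ z, P.derivWeierstrassP (z + 1) = P.derivWeierstrassP z :=
    fun z => P.derivWeierstrassP_add_coe z ⟨1, P.ω₁_mem_lattice⟩
  have q2 : ∀ z, P.derivWeierstrassP (z + ω) = P.derivWeierstrassP z :=
    fun z => P.derivWeierstrassP_add_coe z ⟨ω, P.ω₂_mem_lattice⟩
  obtain ⟨a, b, hab⟩ : ∃ a b : ℕ, n = 2 * a + 3 * b := by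
    rcases Nat.even_or_odd' n with ⟨k, hk | hk⟩
    · exact ⟨k, 0, by omega⟩
    · exact ⟨k - 1, 1, by omega⟩
  refine ⟨fun z => P.weierstrassP z ^ a * (- P.derivWeierstrassP z / 2) ^ b, ?_, ?_, ?_⟩
  · exact (d1.pow a).mul ((d2.neg.div_const 2).pow b)
  · intro z _
    simp only [p1, p2, q1, q2, and_self]
  · have := (t1.pow a).mul (t2.pow b)
    simp only [one_pow, mul_one] at this
    refine this.congr fun z => ?_
    rw [hab, mul_pow, mul_pow, pow_add, pow_mul, pow_mul]
    ring
end

section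
/- For every integer n ≥ 1, the set Vₙ of all functions f : ℂ ∖ L → ℂ that are holomorphic, doubly periodic, and such that z ↦ zⁿ·f(z) extends holomorphically across 0 (i.e. there exist ε > 0 and a holomorphic g on B(0,ε) with g(z) = zⁿ·f(z) for all z ∈ B(0,ε) ∖ {0}) is a ℂ-linear subspace of the space of all functions ℂ ∖ L → ℂ, and its dimension over ℂ equals n. (This is the space of elliptic functions with poles only at the lattice points, of order at most n; in the paper it is spanned by 1, ℘, ℘′, …, ℘^{(n−2)}.) -/
open Metric Filter

/-- The extension by `0` of a function defined on the complement of the lattice `L`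
to a function on all of `ℂ`. -/
noncomputable def latticeExt (L : Set ℂ) (f : ↥(Lᶜ) → ℂ) : ℂ → ℂ :=
  Function.extend Subtype.val f 0

open scoped Topology

structure Ell (Λ : PeriodPair) (n : ℕ) (c : ℂ) (F : ℂ → ℂ) : Prop where
  diff : DifferentiableOn ℂ F (Λ.lattice : Set ℂ)ᶜ
  per : ∀ z, z ∉ Λ.lattice → ∀ l ∈ Λ.lattice, F (z + l) = F z
  ext : ∃ g : ℂ → ℂ, AnalyticAt ℂ g 0 ∧ g 0 = c ∧ ∀ᶠ z in 𝓝[≠] (0 : ℂ), g z = z ^ n * F z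

namespace Ell

variable {Λ : PeriodPair} {n m : ℕ} {c d : ℂ} {F G : ℂ → ℂ}

lemma ev_notMem (Λ : PeriodPair) : ∀ᶠ z in 𝓝[≠] (0 : ℂ), z ∉ Λ.lattice := by
  have h := Λ.compl_lattice_sdiff_singleton_mem_nhds 0
  filter_upwards [mem_nhdsWithin_of_mem_nhds h, self_mem_nhdsWithin] with z hz hz0 hl
  exact hz ⟨hl, hz0⟩

lemma isOpenC (Λ : PeriodPair) : IsOpen (Λ.lattice : Set ℂ)ᶜ := Λ.isClosed_lattice.isOpen_compl

lemma const (Λ : PeriodPair) (c : ℂ) : Ell Λ 0 c (fun _ => c) :=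
  ⟨differentiableOn_const c, fun _ _ _ _ => rfl,
    ⟨fun _ => c, analyticAt_const, rfl, by simp⟩⟩

lemma mul (hF : Ell Λ n c F) (hG : Ell Λ m d G) : Ell Λ (n + m) (c * d) (fun z => F z * G z) := by
  obtain ⟨f, hf, hf0, hfe⟩ := hF.ext
  obtain ⟨g, hg, hg0, hge⟩ := hG.ext
  refine ⟨hF.diff.mul hG.diff, fun z hz l hl => by rw [hF.per z hz l hl, hG.per z hz l hl],
    fun z => f z * g z, hf.mul hg, by simp [hf0, hg0], ?_⟩
  filter_upwards [hfe, hge] with z h1 h2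
  rw [h1, h2]; ring

lemma add (hF : Ell Λ n c F) (hG : Ell Λ n d G) : Ell Λ n (c + d) (fun z => F z + G z) := by
  obtain ⟨f, hf, hf0, hfe⟩ := hF.ext
  obtain ⟨g, hg, hg0, hge⟩ := hG.ext
  refine ⟨hF.diff.add hG.diff, fun z hz l hl => by rw [hF.per z hz l hl, hG.per z hz l hl],
    fun z => f z + g z, hf.add hg, by simp [hf0, hg0], ?_⟩
  filter_upwards [hfe, hge] with z h1 h2
  rw [h1, h2]; ring

lemma smul (a : ℂ) (hF : Ell Λ n c F) : Ell Λ n (a * c) (fun z => a * F z) := by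
  simpa using (const Λ a).mul hF

lemma congr (hF : Ell Λ n c F) (h : ∀ z, z ∉ Λ.lattice → G z = F z) : Ell Λ n c G := by
  obtain ⟨f, hf, hf0, hfe⟩ := hF.ext
  refine ⟨hF.diff.congr h, fun z hz l hl => ?_, f, hf, hf0, ?_⟩
  · rw [h z hz, h, hF.per z hz l hl]
    intro h'
    exact hz (by simpa using sub_mem h' hl)
  · filter_upwards [hfe, ev_notMem Λ] with z h1 h2
    rw [h1, h z h2]

lemma raise (hF : Ell Λ n c F) : Ell Λ (n + 1) 0 F := by
  obtain ⟨f, hf, hf0, hfe⟩ := hF.ext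
  refine ⟨hF.diff, hF.per, fun z => z * f z, analyticAt_id.mul hf, by simp, ?_⟩
  filter_upwards [hfe] with z h1
  rw [h1]; ring

lemma lower (hF : Ell Λ (n + 1) 0 F) : ∃ c, Ell Λ n c F := by
  obtain ⟨f, hf, hf0, hfe⟩ := hF.ext
  obtain ⟨p, hp⟩ := hf
  refine ⟨_, hF.diff, hF.per, dslope f 0, ⟨_, hp.has_fpower_series_dslope_fslope⟩, rfl, ?_⟩
  filter_upwards [hfe, self_mem_nhdsWithin] with z h1 (h2 : z ≠ 0)
  have := sub_smul_dslope f 0 z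
  rw [hf0, h1] at this
  simp only [sub_zero, smul_eq_mul] at this
  apply mul_left_cancel₀ h2
  rw [this]; ring

lemma unique (hF : Ell Λ n c F) (hG : Ell Λ n d F) : c = d := by
  obtain ⟨f, hf, hf0, hfe⟩ := hF.ext
  obtain ⟨g, hg, hg0, hge⟩ := hG.ext
  have h1 : Tendsto f (𝓝[≠] 0) (𝓝 c) := hf0 ▸ hf.continuousAt.tendsto.mono_left nhdsWithin_le_nhds
  have h2 : Tendsto g (𝓝[≠] 0) (𝓝 d) := hg0 ▸ hg.continuousAt.tendsto.mono_left nhdsWithin_le_nhds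
  refine tendsto_nhds_unique h1 (h2.congr' ?_)
  filter_upwards [hfe, hge] with z h1 h2
  rw [h1, h2]

lemma neg (hF : Ell Λ n c F) : Ell Λ n ((-1) ^ n * c) (fun z => F (-z)) := by
  obtain ⟨f, hf, hf0, hfe⟩ := hF.ext
  refine ⟨hF.diff.comp (differentiable_neg.differentiableOn) (fun z hz => ?_),
    fun z hz l hl => ?_, fun z => (-1) ^ n * f (-z), ?_, by simp [hf0], ?_⟩
  · simpa using hz
  · rw [neg_add, hF.per (-z) (by simpa using hz) (-l) (by simpa using hl)]
  · have : AnalyticAt ℂ f (-0) := by simpa using hf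
    exact analyticAt_const.mul (this.comp (f := fun z : ℂ => -z) (by fun_prop))
  · have ht : Tendsto (fun z : ℂ => -z) (𝓝[≠] 0) (𝓝[≠] 0) := by
      refine tendsto_nhdsWithin_of_tendsto_nhds_of_eventually_within _ ?_ ?_
      · have : Tendsto (fun z : ℂ => -z) (𝓝 0) (𝓝 (-0)) := continuous_neg.tendsto 0
        rw [neg_zero] at this
        exact this.mono_left nhdsWithin_le_nhds
      · filter_upwards [self_mem_nhdsWithin] with z hz
        simpa using hz
    filter_upwards [ht.eventually hfe] with z h1
    rw [h1, ← mul_assoc, ← mul_pow]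
    simp

open Classical in
lemma liouville (hF : Ell Λ 0 c F) : ∀ z, z ∉ Λ.lattice → F z = c := by
  obtain ⟨f, hf, hf0, hfe⟩ := hF.ext
  set H : ℂ → ℂ := fun z => if z ∈ Λ.lattice then c else F z with hH
  have hper : ∀ z, ∀ l ∈ Λ.lattice, H (z + l) = H z := by
    intro z l hl
    have : z + l ∈ Λ.lattice ↔ z ∈ Λ.lattice :=
      ⟨fun h => by simpa using sub_mem h hl, fun h => add_mem h hl⟩
    simp only [hH, this]
    split_ifs with h
    · rfl
    · exact hF.per z h l hl
  have h0 : AnalyticAt ℂ H 0 := by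
    refine hf.congr ?_
    have : ∀ᶠ z in 𝓝[≠] (0 : ℂ), f z = H z := by
      filter_upwards [hfe, ev_notMem Λ] with z h1 h2
      simp [hH, h2, h1]
    rw [eventually_nhdsWithin_iff] at this
    filter_upwards [this] with z hz
    by_cases h : z = 0
    · subst h; simp [hH, hf0]
    · exact hz h
  have han : ∀ x, AnalyticAt ℂ H x := by
    intro x
    by_cases hx : x ∈ Λ.lattice
    · have h0' : AnalyticAt ℂ H (x - x) := by simpa using h0
      have h1 := h0'.comp (f := fun z => z - x) (x := x) (by fun_prop)
      have : H ∘ (fun z => z - x) = H := by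
        ext z
        simpa [sub_eq_add_neg] using hper z (-x) (neg_mem hx)
      rwa [this] at h1
    · have h1 := hF.diff.analyticAt ((isOpenC Λ).mem_nhds hx)
      refine h1.congr ?_
      filter_upwards [(isOpenC Λ).mem_nhds hx] with z (hz : z ∉ Λ.lattice)
      simp [hH, hz]
  have hd : Differentiable ℂ H := fun x => (han x).differentiableAt
  intro z hz
  have := hd.apply_eq_apply_of_bounded (IsZLattice.isCompact_range_of_periodic Λ.lattice _
    hd.continuous fun z w hw => hper z w hw).isBounded z 0
  simpa [hH, hz] using this

/-- half of the first period -/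
noncomputable def half (Λ : PeriodPair) : PeriodPair where
  ω₁ := Λ.ω₁ / 2
  ω₂ := Λ.ω₂
  indep := by
    rw [LinearIndependent.pair_iff]
    intro s t h
    have := LinearIndependent.pair_iff.mp Λ.indep (s / 2) t (by
      simp only [Complex.real_smul] at h ⊢
      push_cast
      linear_combination h)
    exact ⟨by linarith [this.1], this.2⟩

lemma le_half {z : ℂ} (hz : z ∈ Λ.lattice) : z ∈ (half Λ).lattice := by
  rw [PeriodPair.mem_lattice] at *
  obtain ⟨a, b, h⟩ := hz
  exact ⟨2 * a, b, by rw [← h]; simp [half]; ring⟩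

lemma half_cases {z : ℂ} (hz : z ∈ (half Λ).lattice) :
    z ∈ Λ.lattice ∨ z - Λ.ω₁ / 2 ∈ Λ.lattice := by
  rw [PeriodPair.mem_lattice] at hz
  obtain ⟨a, b, h⟩ := hz
  simp only [PeriodPair.mem_lattice]
  rcases Int.even_or_odd' a with ⟨k, rfl | rfl⟩
  · left
    exact ⟨k, b, by rw [← h]; simp [half]; ring⟩
  · right
    exact ⟨k, b, by rw [← h]; simp [half]; ring⟩

lemma ne_zero_ev (hF : Ell Λ n c F) (hc : c ≠ 0) : ∀ᶠ z in 𝓝[≠] (0 : ℂ), F z ≠ 0 := by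
  obtain ⟨f, hf, hf0, hfe⟩ := hF.ext
  have h1 : Tendsto f (𝓝[≠] 0) (𝓝 c) := hf0 ▸ hf.continuousAt.tendsto.mono_left nhdsWithin_le_nhds
  filter_upwards [h1.eventually_ne hc, hfe] with z h2 h3 h4
  exact h2 (by rw [h3, h4, mul_zero])

lemma order_one (hF : Ell Λ 1 c F) : c = 0 := by
  by_contra hc
  have h1 := hF.add hF.neg
  rw [show c + (-1) ^ 1 * c = 0 by ring] at h1
  obtain ⟨d, hd⟩ := h1.lower
  have hd' := hd.liouville
  set h : ℂ → ℂ := fun z => F z + (-(d / 2)) with hh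
  have hE : Ell Λ 1 c h := by simpa using hF.add (const Λ (-(d / 2))).raise
  have hodd : ∀ z, z ∉ Λ.lattice → h (-z) = - h z := by
    intro z hz
    have := hd' z hz
    simp only [hh]
    linear_combination this
  have hz0 : ∀ w, w ∉ Λ.lattice → 2 * w ∈ Λ.lattice → h w = 0 := by
    intro w hw hw2
    have h2 := hE.per (-w) (by simpa using hw) _ hw2
    rw [show -w + 2 * w = w by ring, hodd w hw] at h2
    linear_combination h2 / 2
  have n1 := Λ.ω₁_div_two_notMem_lattice
  have n2 := (half Λ).ω₂_div_two_notMem_lattice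
  have z1 : h (Λ.ω₁ / 2) = 0 := hz0 _ n1 (by
    rw [mul_div_cancel₀ _ (two_ne_zero)]; exact Λ.ω₁_mem_lattice)
  have z2 : h (Λ.ω₂ / 2) = 0 := hz0 _ Λ.ω₂_div_two_notMem_lattice (by
    rw [mul_div_cancel₀ _ (two_ne_zero)]; exact Λ.ω₂_mem_lattice)
  have hhalf : Λ.ω₁ / 2 ∈ (half Λ).lattice := (half Λ).ω₁_mem_lattice
  have nm1 : ∀ z, z ∉ (half Λ).lattice → z ∉ Λ.lattice := fun z hz h => hz (le_half h)
  have nm2 : ∀ z, z ∉ (half Λ).lattice → z + Λ.ω₁ / 2 ∉ Λ.lattice := fun z hz h =>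
    hz (by simpa using sub_mem (le_half h) hhalf)
  have han : AnalyticOnNhd ℂ h (Λ.lattice : Set ℂ)ᶜ := hE.diff.analyticOnNhd (isOpenC Λ)
  have hP : Ell (half Λ) 1 0 (fun z => h z * h (z + Λ.ω₁ / 2)) := by
    obtain ⟨f, hf, hf0, hfe⟩ := hE.ext
    refine ⟨?_, ?_, fun z => f z * h (z + Λ.ω₁ / 2), ?_, by simp [z1], ?_⟩
    · exact (hE.diff.mono fun z hz => nm1 z hz).mul
        (hE.diff.comp (by fun_prop) (fun z hz => nm2 z hz))
    · intro z hz l hl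
      rcases half_cases hl with h' | h'
      · rw [hE.per z (nm1 z hz) l h', show z + l + Λ.ω₁ / 2 = z + Λ.ω₁ / 2 + l by ring,
          hE.per _ (nm2 z hz) l h']
      · have e1 := hE.per _ (nm2 z hz) _ h'
        have e2 := hE.per _ (nm1 z hz) _ (add_mem h' Λ.ω₁_mem_lattice)
        rw [show z + Λ.ω₁ / 2 + (l - Λ.ω₁ / 2) = z + l by ring] at e1
        rw [show z + (l - Λ.ω₁ / 2 + Λ.ω₁) = z + l + Λ.ω₁ / 2 by ring] at e2
        rw [e1, e2, mul_comm]
    · have : AnalyticAt ℂ h (0 + Λ.ω₁ / 2) := by simpa using han _ n1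
      exact hf.mul (this.comp (f := fun z : ℂ => z + Λ.ω₁ / 2) (by fun_prop))
    · filter_upwards [hfe] with z hz
      rw [hz]; ring
  obtain ⟨e, he⟩ := hP.lower
  have he' := he.liouville
  have he0 : e = 0 := by
    rw [← he' _ n2]
    simp [half, z2]
  have hev : ∀ᶠ z in 𝓝[≠] (0 : ℂ), h (z + Λ.ω₁ / 2) = 0 := by
    filter_upwards [hE.ne_zero_ev hc, ev_notMem (half Λ)] with z h1 h2
    have := he' z h2
    rw [he0] at this
    exact (mul_eq_zero.mp this).resolve_left h1
  have hfr : ∃ᶠ z in 𝓝[≠] (Λ.ω₁ / 2), h z = 0 := by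
    have ht : Tendsto (fun z : ℂ => z + Λ.ω₁ / 2) (𝓝[≠] 0) (𝓝[≠] (Λ.ω₁ / 2)) := by
      refine tendsto_nhdsWithin_of_tendsto_nhds_of_eventually_within _ ?_ ?_
      · have : Tendsto (fun z : ℂ => z + Λ.ω₁ / 2) (𝓝 0) (𝓝 (0 + Λ.ω₁ / 2)) :=
          (by fun_prop : Continuous fun z : ℂ => z + Λ.ω₁ / 2).tendsto 0
        rw [zero_add] at this
        exact this.mono_left nhdsWithin_le_nhds
      · filter_upwards [self_mem_nhdsWithin] with z hz
        simpa using hz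
    exact ht.frequently hev.frequently
  have hconn : IsPreconnected (Λ.lattice : Set ℂ)ᶜ := by
    refine (Set.Countable.isConnected_compl_of_one_lt_rank (by simp) ?_).2
    have : Countable Λ.lattice := Λ.latticeEquivProd.toEquiv.countable_iff.mpr inferInstance
    exact Set.to_countable _
  have hall := han.eqOn_zero_of_preconnected_of_frequently_eq_zero hconn n1 hfr
  obtain ⟨z, hz1, hz2⟩ := ((hE.ne_zero_ev hc).and (ev_notMem Λ)).exists
  exact hz1 (hall hz2)

lemma wp (Λ : PeriodPair) : Ell Λ 2 1 Λ.weierstrassP := by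
  refine ⟨Λ.differentiableOn_weierstrassP, fun z _ l hl => Λ.weierstrassP_add_coe z ⟨l, hl⟩,
    fun z => z ^ 2 * Λ.weierstrassPExcept 0 z + 1, ?_, by simp, ?_⟩
  · have := Λ.analyticAt_weierstrassPExcept 0
    fun_prop
  · filter_upwards [self_mem_nhdsWithin] with z (hz : z ≠ 0)
    have := Λ.weierstrassPExcept_add 0 z
    rw [← this]
    simp
    field_simp

lemma wp' (Λ : PeriodPair) : Ell Λ 3 (-2) Λ.derivWeierstrassP := by
  refine ⟨Λ.differentiableOn_derivWeierstrassP,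
    fun z _ l hl => Λ.derivWeierstrassP_add_coe z ⟨l, hl⟩,
    fun z => z ^ 3 * Λ.derivWeierstrassPExcept 0 z - 2, ?_, by simp, ?_⟩
  · have := Λ.analyticAt_derivWeierstrassPExcept 0
    fun_prop
  · filter_upwards [self_mem_nhdsWithin] with z (hz : z ≠ 0)
    have := Λ.derivWeierstrassPExcept_sub 0 z
    rw [← this]
    simp
    field_simp

lemma exists_order (Λ : PeriodPair) (k : ℕ) : ∃ c F, c ≠ 0 ∧ Ell Λ (k + 2) c F := by
  induction k using Nat.twoStepInduction with
  | zero => exact ⟨_, _, one_ne_zero, wp Λ⟩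
  | one => exact ⟨_, _, by norm_num, wp' Λ⟩
  | more k ih _ =>
    obtain ⟨c, F, hc, hF⟩ := ih
    exact ⟨_, _, mul_ne_zero hc one_ne_zero, hF.mul (wp Λ)⟩

end Ell

lemma latticeExt_apply (L : Set ℂ) (f : ↥(Lᶜ) → ℂ) (z : ℂ) (hz : z ∈ Lᶜ) :
    latticeExt L f z = f ⟨z, hz⟩ :=
  Subtype.val_injective.extend_apply f 0 ⟨z, hz⟩

/-- the spaces -/
noncomputable def ellSpace (Λ : PeriodPair) (n : ℕ) :
    Submodule ℂ (↥((Λ.lattice : Set ℂ)ᶜ) → ℂ) where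
  carrier := {f | ∃ c, Ell Λ n c (latticeExt Λ.lattice f)}
  zero_mem' := by
    have h : ∃ c, Ell Λ n c (fun _ => 0) := by
      induction n with
      | zero => exact ⟨_, Ell.const Λ 0⟩
      | succ n ih => exact ⟨_, ih.choose_spec.raise⟩
    obtain ⟨c, h⟩ := h
    exact ⟨c, h.congr fun z hz => by rw [latticeExt_apply _ _ z hz]; rfl⟩
  add_mem' := by
    rintro f g ⟨c, hf⟩ ⟨d, hg⟩
    exact ⟨_, (hf.add hg).congr fun z hz => by simp [latticeExt_apply _ _ z hz]⟩
  smul_mem' := by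
    rintro a f ⟨c, hf⟩
    exact ⟨_, (hf.smul a).congr fun z hz => by simp [latticeExt_apply _ _ z hz]⟩

lemma mem_ellSpace {Λ : PeriodPair} {n : ℕ} {f} :
    f ∈ ellSpace Λ n ↔ ∃ c, Ell Λ n c (latticeExt Λ.lattice f) := Iff.rfl

lemma ellSpace_one (Λ : PeriodPair) : ellSpace Λ 1 = Submodule.span ℂ {1} := by
  ext f
  rw [Submodule.mem_span_singleton, mem_ellSpace]
  constructor
  · rintro ⟨c, hf⟩
    have := hf.order_one
    subst this
    obtain ⟨d, hd⟩ := hf.lower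
    refine ⟨d, ?_⟩
    ext ⟨z, hz⟩
    have := hd.liouville z hz
    rw [latticeExt_apply _ _ z hz] at this
    simp [this]
  · rintro ⟨a, rfl⟩
    exact ⟨_, (Ell.const Λ a).raise.congr fun z hz => by simp [latticeExt_apply _ _ z hz]⟩

lemma ellSpace_succ (Λ : PeriodPair) (k : ℕ) : ∃ e, e ∉ ellSpace Λ (k + 1) ∧
    ellSpace Λ (k + 2) = ellSpace Λ (k + 1) ⊔ Submodule.span ℂ {e} := by
  obtain ⟨c, F, hc, hF⟩ := Ell.exists_order Λ k
  have he : Ell Λ (k + 2) c (latticeExt Λ.lattice (fun z => F z.1)) :=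
    hF.congr fun z hz => by rw [latticeExt_apply _ _ z hz]
  refine ⟨fun z => F z.1, ?_, le_antisymm ?_ ?_⟩
  · rintro ⟨d, hd⟩
    exact hc (he.unique hd.raise)
  · rintro f ⟨d, hf⟩
    rw [Submodule.mem_sup]
    have h1 := hf.add (he.smul (-(d / c)))
    rw [show d + -(d / c) * c = 0 by field_simp; ring] at h1
    refine ⟨f - (d / c) • (fun z => F z.1), ?_, (d / c) • (fun z => F z.1),
      Submodule.smul_mem _ _ (Submodule.mem_span_singleton_self _), by simp⟩
    obtain ⟨b, hb⟩ := h1.lower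
    exact ⟨b, hb.congr fun z hz => by simp [latticeExt_apply _ _ z hz]; ring⟩
  · rw [sup_le_iff]
    refine ⟨fun f ⟨d, hd⟩ => ⟨_, hd.raise⟩, ?_⟩
    rw [Submodule.span_singleton_le_iff_mem]
    exact ⟨_, he⟩

lemma finrank_ellSpace (Λ : PeriodPair) (k : ℕ) :
    FiniteDimensional ℂ (ellSpace Λ (k + 1)) ∧ Module.finrank ℂ (ellSpace Λ (k + 1)) = k + 1 := by
  induction k with
  | zero =>
    rw [zero_add, ellSpace_one]
    refine ⟨inferInstance, finrank_span_singleton ?_⟩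
    intro h
    have := congrFun h ⟨Λ.ω₁ / 2, Λ.ω₁_div_two_notMem_lattice⟩
    simp at this
  | succ k ih =>
    obtain ⟨h1, h2⟩ := ih
    obtain ⟨e, he, hs⟩ := ellSpace_succ Λ k
    rw [show k + 1 + 1 = k + 2 from rfl, hs]
    refine ⟨inferInstance, ?_⟩
    have hne : e ≠ 0 := by
      rintro rfl
      exact he (zero_mem _)
    have hdis : Disjoint (ellSpace Λ (k + 1)) (Submodule.span ℂ {e}) :=
      (Submodule.disjoint_span_singleton' hne).mpr he
    have := Submodule.finrank_sup_add_finrank_inf_eq (ellSpace Λ (k + 1)) (Submodule.span ℂ {e})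
    rw [hdis.eq_bot, finrank_bot, add_zero, h2,
      finrank_span_singleton hne] at this
    exact this

/-- The space of elliptic functions with poles only at lattice points, of order at
most `n`, is a `ℂ`-linear subspace of dimension `n` of the space of all functions
`ℂ ∖ L → ℂ`. -/
theorem elliptic_functions_of_order_le_n_dimension
    (ω : ℂ) (hω : 0 < ω.im)
    (L : Set ℂ) (hL : L = {z : ℂ | ∃ m n : ℤ, z = (m : ℂ) + (n : ℂ) * ω})
    (n : ℕ) (hn : 1 ≤ n) :
    ∃ V : Submodule ℂ (↥(Lᶜ) → ℂ),
      (V : Set (↥(Lᶜ) → ℂ)) =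
        {f : ↥(Lᶜ) → ℂ |
          DifferentiableOn ℂ (latticeExt L f) Lᶜ ∧
          (∀ z ∈ Lᶜ, latticeExt L f (z + 1) = latticeExt L f z ∧
            latticeExt L f (z + ω) = latticeExt L f z) ∧
          (∃ ε > 0, (ball (0 : ℂ) ε \ {0}) ⊆ Lᶜ ∧
            ∃ g : ℂ → ℂ, DifferentiableOn ℂ g (ball (0 : ℂ) ε) ∧
              ∀ z ∈ ball (0 : ℂ) ε \ {0}, g z = z ^ n * latticeExt L f z)} ∧
      Module.finrank ℂ ↥V = n := by
  have hind : LinearIndependent ℝ ![(1 : ℂ), ω] := by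
    rw [LinearIndependent.pair_iff]
    intro s t h
    have h1 := congrArg Complex.im h
    have h2 := congrArg Complex.re h
    simp at h1 h2
    have ht : t = 0 := h1.resolve_right hω.ne'
    subst ht
    simpa using h2
  let Λ : PeriodPair := ⟨1, ω, hind⟩
  have hLΛ : L = (Λ.lattice : Set ℂ) := by
    rw [hL]
    ext z
    simp only [Set.mem_ofPred_eq, SetLike.mem_coe, PeriodPair.mem_lattice, Λ, mul_one, eq_comm]
  clear hL
  subst hLΛ
  refine ⟨ellSpace Λ n, ?_, ?_⟩
  · ext f
    rw [SetLike.mem_coe, mem_ellSpace, Set.mem_ofPred_eq]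
    set F := latticeExt (Λ.lattice : Set ℂ) f
    constructor
    · rintro ⟨c, hF⟩
      refine ⟨hF.diff, fun z hz => ⟨hF.per z hz _ Λ.ω₁_mem_lattice,
        hF.per z hz _ Λ.ω₂_mem_lattice⟩, ?_⟩
      obtain ⟨g, hg, hg0, hge⟩ := hF.ext
      have h1 := hg.eventually_analyticAt
      have h2 := hge.and (Ell.ev_notMem Λ)
      rw [eventually_nhdsWithin_iff] at h2
      obtain ⟨ε, hε, hb⟩ := Metric.eventually_nhds_iff_ball.mp (h1.and h2)
      exact ⟨ε, hε, fun z hz => ((hb z hz.1).2 hz.2).2, g,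
        fun z hz => (hb z hz).1.differentiableAt.differentiableWithinAt,
        fun z hz => ((hb z hz.1).2 hz.2).1⟩
    · rintro ⟨hd, hp, ε, hε, -, g, hg, hge⟩
      refine ⟨g 0, hd, ?_, g, hg.analyticAt (ball_mem_nhds 0 hε), rfl, ?_⟩
      · have key : ∀ w ∈ Λ.lattice, (∀ z ∉ Λ.lattice, F (z + w) = F z) → ∀ k : ℤ,
            ∀ z ∉ Λ.lattice, F (z + k * w) = F z := by
          intro w hw hper k
          have hmem : ∀ (k : ℤ) (z : ℂ), z ∉ Λ.lattice → z + k * w ∉ Λ.lattice := by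
            intro k z hz h
            refine hz ?_
            have := sub_mem h (Λ.lattice.smul_mem k hw)
            simpa using this
          induction k using Int.induction_on with
          | zero => simp
          | succ i ih =>
            intro z hz
            rw [← ih z hz, ← hper _ (hmem i z hz)]
            congr 1
            push_cast
            ring
          | pred i ih =>
            intro z hz
            rw [← ih z hz, ← hper _ (hmem _ z hz)]
            congr 1
            push_cast
            ring
        intro z hz l hl
        obtain ⟨a, b, rfl⟩ := PeriodPair.mem_lattice.mp hl
        have hz' : z + a * Λ.ω₁ ∉ Λ.lattice := by
          intro h
          refine hz ?_
          have := sub_mem h (Λ.lattice.smul_mem a Λ.ω₁_mem_lattice)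
          simpa using this
        rw [← add_assoc, key _ Λ.ω₂_mem_lattice (fun z hz => (hp z hz).2) b _ hz',
          key _ Λ.ω₁_mem_lattice (fun z hz => (hp z hz).1) a _ hz]
      · rw [eventually_nhdsWithin_iff]
        filter_upwards [ball_mem_nhds 0 hε] with z hz hz0
        exact hge z ⟨hz, hz0⟩
  · obtain ⟨k, rfl⟩ : ∃ k, n = k + 1 := ⟨n - 1, by omega⟩
    exact (finrank_ellSpace Λ k).2
end

section
/- Let n ≥ 2 be an integer, let f : ℂ ∖ L → ℂ be holomorphic and doubly periodic, and let c₁, c₂, …, cₙ ∈ ℂ. Suppose the function z ↦ f(z) + c₁/z + (cₙ·z + cₙ₋₁·z² + ⋯ + c₂·z^{n−1}) extends to a holomorphic function g on a ball B(0,ε) (with B(0,ε) ∖ {0} ⊆ ℂ ∖ L) whose zero at 0 has order at least n, i.e. g(z)/z^{n−1} → 0 as z → 0. Then f is identically 0 and c₁ = c₂ = ⋯ = cₙ = 0. (This is the analytic core of the paper's claim that the cochains 1/u₁^{n+1}·∂/∂ξ₁ ∧ ∂/∂u₁ and 1/u₁^{k}·∂/∂ξ₁ ∧ ∂/∂u₁,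 k = 1, …, n−1, together with ξ₁/u₁·∂/∂ξ₁ ∧ ∂/∂u₁, represent linearly independent classes in H¹(Sₙ, ∧²Θ).) -/
open Metric Filter

open Topology in
theorem aux_poly (p : Polynomial ℂ) (m : ℕ) (hp : p.natDegree ≤ m)
    (h : Tendsto (fun z => p.eval z / z ^ m) (𝓝[≠] (0:ℂ)) (𝓝 0)) : p = 0 := by
  by_contra hne
  obtain ⟨q, hq, hnd⟩ := Polynomial.exists_eq_pow_rootMultiplicity_mul_and_not_dvd p hne 0
  set k := p.rootMultiplicity 0
  have hk : k ≤ m := by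
    have := Polynomial.natDegree_le_of_dvd (Polynomial.pow_rootMultiplicity_dvd p 0) hne
    rw [Polynomial.natDegree_pow, Polynomial.natDegree_X_sub_C, mul_one] at this
    exact this.trans hp
  have h2 : Tendsto (fun z : ℂ => z ^ (m - k)) (𝓝[≠] (0:ℂ)) (𝓝 (0 ^ (m-k))) :=
    ((continuous_pow (m-k)).tendsto 0).mono_left nhdsWithin_le_nhds
  have h3 := h.mul h2
  rw [zero_mul] at h3
  have h4 : Tendsto (fun z : ℂ => q.eval z) (𝓝[≠] (0:ℂ)) (𝓝 (q.eval 0)) :=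
    (q.continuous.tendsto 0).mono_left nhdsWithin_le_nhds
  have h5 : Tendsto (fun z : ℂ => q.eval z) (𝓝[≠] (0:ℂ)) (𝓝 0) := by
    refine h3.congr' ?_
    filter_upwards [self_mem_nhdsWithin] with z hz
    have hz : z ≠ 0 := hz
    rw [hq]
    have : z ^ m = z ^ k * z ^ (m - k) := by rw [← pow_add]; congr 1; omega
    rw [this]
    simp
    field_simp
  have h6 := tendsto_nhds_unique h4 h5
  exact hnd (Polynomial.dvd_iff_isRoot.mpr h6)

def LatS (ω : ℂ) : Set ℂ := {z : ℂ | ∃ m n : ℤ, z = (m : ℂ) + (n : ℂ) * ω}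

theorem LatS_add1 {ω z : ℂ} : z + 1 ∈ LatS ω ↔ z ∈ LatS ω := by
  constructor
  · rintro ⟨m, n, h⟩
    exact ⟨m - 1, n, by push_cast; linear_combination h⟩
  · rintro ⟨m, n, h⟩
    exact ⟨m + 1, n, by push_cast; linear_combination h⟩

theorem LatS_addω {ω z : ℂ} : z + ω ∈ LatS ω ↔ z ∈ LatS ω := by
  constructor
  · rintro ⟨m, n, h⟩
    exact ⟨m, n - 1, by push_cast; linear_combination h⟩
  · rintro ⟨m, n, h⟩
    exact ⟨m, n + 1, by push_cast; linear_combination h⟩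

theorem LatS_neg {ω z : ℂ} : -z ∈ LatS ω ↔ z ∈ LatS ω := by
  constructor
  · rintro ⟨m, n, h⟩
    exact ⟨-m, -n, by push_cast; linear_combination -h⟩
  · rintro ⟨m, n, h⟩
    exact ⟨-m, -n, by push_cast; linear_combination -h⟩

theorem LatS_coord {ω : ℂ} (hω : 0 < ω.im) (x y : ℝ) (h : (x : ℂ) + y * ω ∈ LatS ω) :
    ∃ m n : ℤ, x = m ∧ y = n := by
  obtain ⟨m, n, h⟩ := h
  have h1 := congrArg Complex.im h
  have h2 := congrArg Complex.re h
  simp at h1 h2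
  have hy : y = n := by
    rcases h1 with h1 | h1
    · exact h1
    · exact absurd h1 hω.ne'
  exact ⟨m, n, by rw [hy] at h2; linarith, hy⟩

theorem coord {ω : ℂ} (hω : 0 < ω.im) (z : ℂ) :
    z = ((z.re - z.im / ω.im * ω.re : ℝ) : ℂ) + ((z.im / ω.im : ℝ) : ℂ) * ω := by
  apply Complex.ext
  · simp only [Complex.add_re, Complex.ofReal_re, Complex.mul_re, Complex.ofReal_im]; ring
  · simp only [Complex.add_im, Complex.ofReal_re, Complex.mul_im, Complex.ofReal_im]
    field_simp; ring

theorem LatS_closed {ω : ℂ} (hω : 0 < ω.im) : IsClosed (LatS ω) := by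
  have hZ : IsClosed (Set.range ((↑) : ℤ → ℝ)) := Int.isClosedEmbedding_coe_real.isClosed_range
  have : LatS ω = (fun z : ℂ => z.re - z.im / ω.im * ω.re) ⁻¹' (Set.range ((↑) : ℤ → ℝ)) ∩
      (fun z : ℂ => z.im / ω.im) ⁻¹' (Set.range ((↑) : ℤ → ℝ)) := by
    ext z
    constructor
    · intro h
      rw [coord hω z] at h
      obtain ⟨m, n, h1, h2⟩ := LatS_coord hω _ _ h
      exact ⟨⟨m, h1.symm⟩, ⟨n, h2.symm⟩⟩
    · rintro ⟨⟨m, h1⟩, ⟨n, h2⟩⟩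
      refine ⟨m, n, ?_⟩
      rw [coord hω z]
      simp only at h1 h2
      rw [← h1, ← h2]
      simp
  rw [this]
  refine (hZ.preimage ?_).inter (hZ.preimage ?_)
  · fun_prop
  · fun_prop

theorem LatS_countable (ω : ℂ) : (LatS ω).Countable := by
  have : LatS ω = Set.range (fun p : ℤ × ℤ => (p.1 : ℂ) + (p.2 : ℂ) * ω) := by
    ext z
    constructor
    · rintro ⟨m, n, h⟩
      exact ⟨(m, n), h.symm⟩
    · rintro ⟨⟨m, n⟩, h⟩
      exact ⟨m, n, h.symm⟩
  rw [this]
  exact Set.countable_range _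

theorem per_all {ω : ℂ} {F : ℂ → ℂ} (h1 : ∀ z, F (z + 1) = F z) (h2 : ∀ z, F (z + ω) = F z)
    (m n : ℤ) (z : ℂ) : F (z + (m + n * ω)) = F z := by
  have h1' : Function.Periodic F 1 := h1
  have h2' : Function.Periodic F ω := h2
  have := h1'.int_mul m
  have := h2'.int_mul n (z + m)
  rw [← add_assoc, this]
  simpa using h1'.int_mul m z

theorem entire_const {ω : ℂ} (hω : 0 < ω.im) {F : ℂ → ℂ} (hF : Differentiable ℂ F)
    (h1 : ∀ z, F (z + 1) = F z) (h2 : ∀ z, F (z + ω) = F z) (z w : ℂ) : F z = F w := by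
  refine hF.apply_eq_apply_of_bounded ?_ z w
  have hK : IsCompact ((fun p : ℝ × ℝ => F ((p.1 : ℂ) + p.2 * ω)) ''
      (Set.Icc (0:ℝ) 1 ×ˢ Set.Icc (0:ℝ) 1)) := by
    apply (isCompact_Icc.prod isCompact_Icc).image
    have := hF.continuous
    fun_prop
  refine hK.isBounded.subset ?_
  rintro _ ⟨z, rfl⟩
  set x : ℝ := z.re - z.im / ω.im * ω.re with hx
  set y : ℝ := z.im / ω.im with hy
  have hz : z = x + y * ω := coord hω z
  refine ⟨(Int.fract x, Int.fract y), ⟨⟨Int.fract_nonneg _, (Int.fract_lt_one _).le⟩,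
    ⟨Int.fract_nonneg _, (Int.fract_lt_one _).le⟩⟩, ?_⟩
  have := per_all h1 h2 ⌊x⌋ ⌊y⌋ (((Int.fract x : ℝ) : ℂ) + (Int.fract y : ℝ) * ω)
  simp only
  rw [← this]
  congr 1
  rw [hz]
  have e1 : (x : ℂ) = ((⌊x⌋ : ℝ) : ℂ) + ((Int.fract x : ℝ) : ℂ) := by
    rw [← Complex.ofReal_add, Int.floor_add_fract]
  have e2 : (y : ℂ) = ((⌊y⌋ : ℝ) : ℂ) + ((Int.fract y : ℝ) : ℂ) := by
    rw [← Complex.ofReal_add, Int.floor_add_fract]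
  push_cast at e1 e2
  linear_combination -e1 - ω * e2

open Topology in
theorem punct_const {ω : ℂ} (hω : 0 < ω.im) {h r : ℂ → ℂ}
    (hd : DifferentiableOn ℂ h (LatS ω)ᶜ)
    (h1 : ∀ z ∉ LatS ω, h (z + 1) = h z) (h2 : ∀ z ∉ LatS ω, h (z + ω) = h z)
    (hL : ∀ᶠ z in 𝓝[≠] (0:ℂ), z ∉ LatS ω)
    (hr : AnalyticAt ℂ r 0) (hhr : ∀ᶠ z in 𝓝[≠] (0:ℂ), h z = r z) :
    ∃ C, ∀ z ∉ LatS ω, h z = C := by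
  classical
  set F : ℂ → ℂ := fun z => if z ∈ LatS ω then r 0 else h z with hFdef
  have F1 : ∀ z, F (z + 1) = F z := by
    intro z
    by_cases hz : z ∈ LatS ω
    · simp [hFdef, hz, LatS_add1]
    · simp [hFdef, hz, LatS_add1, h1 z hz]
  have F2 : ∀ z, F (z + ω) = F z := by
    intro z
    by_cases hz : z ∈ LatS ω
    · simp [hFdef, hz, LatS_addω]
    · simp [hFdef, hz, LatS_addω, h2 z hz]
  have h0 : (0:ℂ) ∈ LatS ω := ⟨0, 0, by simp⟩
  have Fr : F =ᶠ[𝓝 0] r := by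
    have : ∀ᶠ z in 𝓝[≠] (0:ℂ), F z = r z := by
      filter_upwards [hL, hhr] with z hz1 hz2
      simp [hFdef, hz1, hz2]
    rw [eventually_nhdsWithin_iff] at this
    filter_upwards [this] with z hz
    by_cases hz0 : z = 0
    · subst hz0; simp [hFdef, h0]
    · exact hz hz0
  have Fd0 : DifferentiableAt ℂ F 0 := hr.differentiableAt.congr_of_eventuallyEq Fr
  have Fd : Differentiable ℂ F := by
    intro z
    by_cases hz : z ∈ LatS ω
    · obtain ⟨m, n, hmn⟩ := hz
      have : F = fun w => F (w - z) := by
        funext w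
        have := per_all F1 F2 m n (w - z)
        rw [← this, ← hmn]; simp
      rw [this]
      have h3 : DifferentiableAt ℂ F (z - z) := by simpa using Fd0
      exact DifferentiableAt.comp (f := fun w => w - z) z h3 (by fun_prop)
    · have ho : (LatS ω)ᶜ ∈ 𝓝 z := (LatS_closed hω).isOpen_compl.mem_nhds hz
      refine (hd.differentiableAt ho).congr_of_eventuallyEq ?_
      filter_upwards [ho] with w hw
      have hw : w ∉ LatS ω := hw
      simp [hFdef, hw]
  refine ⟨F 0, fun z hz => ?_⟩
  rw [← entire_const hω Fd F1 F2 z 0]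
  simp [hFdef, hz]

theorem half_not (k : ℤ) : (1/2:ℝ) ≠ k := by
  intro h
  have : (1:ℝ) = ((2 * k : ℤ) : ℝ) := by push_cast; linarith
  have : (1:ℤ) = 2 * k := by exact_mod_cast this
  omega

open Topology in
theorem odd_case {ω : ℂ} (hω : 0 < ω.im) {f r : ℂ → ℂ} {a : ℂ}
    (hd : DifferentiableOn ℂ f (LatS ω)ᶜ)
    (h1 : ∀ z ∉ LatS ω, f (z + 1) = f z) (h2 : ∀ z ∉ LatS ω, f (z + ω) = f z)
    (hL : ∀ᶠ z in 𝓝[≠] (0:ℂ), z ∉ LatS ω)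
    (hr : AnalyticAt ℂ r 0) (hfr : ∀ᶠ z in 𝓝[≠] (0:ℂ), f z = a / z + r z)
    (hodd : ∀ z ∉ LatS ω, f (-z) = - f z) : a = 0 := by
  by_contra ha
  have n1 : (1/2:ℂ) ∉ LatS ω := by
    intro h
    obtain ⟨m, n, hm, hn⟩ := LatS_coord hω (1/2) 0 (by simpa using h)
    exact half_not _ hm
  have n2 : (ω/2:ℂ) ∉ LatS ω := by
    intro h
    obtain ⟨m, n, hm, hn⟩ := LatS_coord hω 0 (1/2)
      (by convert h using 1; push_cast; ring)
    exact half_not _ hn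
  have z1 : f (1/2) = 0 := by
    have e1 := h1 (-(1/2)) (by rwa [LatS_neg])
    rw [hodd _ n1] at e1
    rw [show -(1/2:ℂ) + 1 = 1/2 by norm_num] at e1
    have : f (1/2) + f (1/2) = 0 := by linear_combination e1
    simpa using this
  have z2 : f (ω/2) = 0 := by
    have e1 := h2 (-(ω/2)) (by rwa [LatS_neg])
    rw [hodd _ n2, show -(ω/2) + ω = ω/2 by ring] at e1
    have : f (ω/2) + f (ω/2) = 0 := by linear_combination e1
    simpa using this
  have hω2 : 0 < (2 * ω).im := by simpa using hω
  -- non-membership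
  have k1 : ∀ z ∉ LatS (2*ω), z/2 ∉ LatS ω := by
    rintro z hz ⟨m, n, h⟩
    exact hz ⟨2*m, n, by push_cast; linear_combination 2 * h⟩
  have k2 : ∀ z ∉ LatS (2*ω), z/2 + 1/2 ∉ LatS ω := by
    rintro z hz ⟨m, n, h⟩
    exact hz ⟨2*m-1, n, by push_cast; linear_combination 2 * h⟩
  have hsub : ∀ z, z ∉ LatS ω → z ∉ LatS (2*ω) := by
    rintro z hz ⟨m, n, h⟩
    exact hz ⟨m, 2*n, by push_cast; linear_combination h⟩
  have hopen : IsOpen (LatS ω)ᶜ := (LatS_closed hω).isOpen_compl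
  have hfA : ∀ z ∉ LatS ω, AnalyticAt ℂ f z := fun z hz =>
    (hd.analyticOnNhd hopen) z hz
  have hq : AnalyticAt ℂ (fun z : ℂ => f (z/2 + 1/2)) 0 := by
    have : AnalyticAt ℂ f ((0:ℂ)/2 + 1/2) := by
      rw [zero_div, zero_add]; exact hfA _ n1
    exact AnalyticAt.comp' (f := fun z : ℂ => z/2 + 1/2) this (by fun_prop)
  have hr2 : AnalyticAt ℂ (fun z : ℂ => r (z/2)) 0 := by
    have : AnalyticAt ℂ r ((0:ℂ)/2) := by
      rw [zero_div]; exact hr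
    exact AnalyticAt.comp' (f := fun z : ℂ => z/2) this (by fun_prop)
  have hds : AnalyticAt ℂ (dslope (fun z : ℂ => f (z/2 + 1/2)) 0) 0 := by
    obtain ⟨p, hp⟩ := hq
    exact ⟨_, hp.has_fpower_series_dslope_fslope⟩
  have t2 : Tendsto (fun z : ℂ => z/2) (𝓝[≠] 0) (𝓝[≠] 0) := by
    apply tendsto_nhdsWithin_of_tendsto_nhds_of_eventually_within
    · have : Continuous (fun z : ℂ => z/2) := by fun_prop
      have := this.tendsto 0
      rw [zero_div] at this
      exact this.mono_left nhdsWithin_le_nhds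
    · filter_upwards [self_mem_nhdsWithin] with z hz
      have hz : z ≠ 0 := hz
      simpa using hz
  obtain ⟨C, hC⟩ := punct_const hω2 (h := fun z => f (z/2) * f (z/2 + 1/2))
    (r := fun z => 2 * a * dslope (fun z : ℂ => f (z/2 + 1/2)) 0 z + r (z/2) * f (z/2+1/2))
    (by
      intro z hz
      have d1 : DifferentiableAt ℂ (fun z : ℂ => f (z/2)) z :=
        DifferentiableAt.comp (g := f) (f := fun z : ℂ => z/2) z
          (hfA _ (k1 z hz)).differentiableAt (by fun_prop)
      have d2 : DifferentiableAt ℂ (fun z : ℂ => f (z/2+1/2)) z :=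
        DifferentiableAt.comp (g := f) (f := fun z : ℂ => z/2+1/2) z
          (hfA _ (k2 z hz)).differentiableAt (by fun_prop)
      exact (d1.mul d2).differentiableWithinAt)
    (by
      intro z hz
      have := h1 _ (k1 z hz)
      rw [show (z+1)/2 + 1/2 = z/2 + 1 by ring, this, show (z+1)/2 = z/2+1/2 by ring, mul_comm])
    (by
      intro z hz
      rw [show (z+2*ω)/2 + 1/2 = (z/2 + 1/2) + ω by ring, h2 _ (k2 z hz),
        show (z+2*ω)/2 = z/2+ω by ring, h2 _ (k1 z hz)])
    (hL.mono hsub)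
    ((analyticAt_const.mul hds).add (hr2.mul hq))
    (by
      filter_upwards [t2.eventually hfr, self_mem_nhdsWithin] with z hz hz0
      have hz0 : z ≠ 0 := hz0
      rw [hz, dslope_of_ne _ hz0, slope_def_field, zero_div, zero_add, z1]
      field_simp
      ring)
  have hCz : C = 0 := by
    rw [← hC ω (by
      rintro h
      obtain ⟨m, n, hm, hn⟩ := LatS_coord hω2 0 (1/2)
        (by convert h using 1; push_cast; ring)
      exact half_not _ hn)]
    simp [z2]
  have hfne : ∀ᶠ z in 𝓝[≠] (0:ℂ), f z ≠ 0 := by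
    have t : Tendsto (fun z => a + z * r z) (𝓝[≠] (0:ℂ)) (𝓝 (a + 0 * r 0)) :=
      ((continuousAt_const.add (continuousAt_id.mul hr.continuousAt)).tendsto).mono_left
        nhdsWithin_le_nhds
    rw [zero_mul, add_zero] at t
    filter_upwards [t.eventually_ne ha, hfr, self_mem_nhdsWithin] with z hz hz1 hz0 hf0
    have hz0 : z ≠ 0 := hz0
    apply hz
    rw [hf0] at hz1
    field_simp at hz1
    rw [← hz1]; simp
  have hq0 : ∀ᶠ z in 𝓝[≠] (0:ℂ), f (z/2 + 1/2) = 0 := by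
    filter_upwards [t2.eventually hfne, hL.mono hsub] with z hz hz1
    have := hC z hz1
    rw [hCz] at this
    exact (mul_eq_zero.mp this).resolve_left hz
  have hfreq : ∃ᶠ z in 𝓝[≠] (1/2:ℂ), f z = 0 := by
    have t : Tendsto (fun z : ℂ => z/2+1/2) (𝓝[≠] 0) (𝓝[≠] (1/2)) := by
      apply tendsto_nhdsWithin_of_tendsto_nhds_of_eventually_within
      · have : Continuous (fun z : ℂ => z/2+1/2) := by fun_prop
        have := this.tendsto 0
        rw [zero_div, zero_add] at this
        exact this.mono_left nhdsWithin_le_nhds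
      · filter_upwards [self_mem_nhdsWithin] with z hz
        have hz : z ≠ 0 := hz
        simpa using hz
    exact t.frequently hq0.frequently
  have hconn : IsPreconnected (LatS ω)ᶜ := by
    refine (Set.Countable.isConnected_compl_of_one_lt_rank ?_ (LatS_countable ω)).isPreconnected
    rw [Complex.rank_real_complex]; norm_num
  have hz := (hd.analyticOnNhd hopen).eqOn_zero_of_preconnected_of_frequently_eq_zero
    hconn n1 hfreq
  obtain ⟨z, hz1, hz2⟩ := (hfne.and hL).exists
  exact hz1 (hz hz2)

open Topology in
theorem res_zero {ω : ℂ} (hω : 0 < ω.im) {f r : ℂ → ℂ} {a : ℂ}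
    (hd : DifferentiableOn ℂ f (LatS ω)ᶜ)
    (h1 : ∀ z ∉ LatS ω, f (z + 1) = f z) (h2 : ∀ z ∉ LatS ω, f (z + ω) = f z)
    (hL : ∀ᶠ z in 𝓝[≠] (0:ℂ), z ∉ LatS ω)
    (hr : AnalyticAt ℂ r 0) (hfr : ∀ᶠ z in 𝓝[≠] (0:ℂ), f z = a / z + r z) : a = 0 := by
  have hopen : IsOpen (LatS ω)ᶜ := (LatS_closed hω).isOpen_compl
  have tn : Tendsto (fun z : ℂ => -z) (𝓝[≠] 0) (𝓝[≠] 0) := by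
    apply tendsto_nhdsWithin_of_tendsto_nhds_of_eventually_within
    · have := (continuous_neg (G := ℂ)).tendsto 0
      rw [neg_zero] at this
      exact this.mono_left nhdsWithin_le_nhds
    · filter_upwards [self_mem_nhdsWithin] with z hz
      have hz : z ≠ 0 := hz
      simpa using hz
  have hrn : AnalyticAt ℂ (fun z : ℂ => r (-z)) 0 := by
    have : AnalyticAt ℂ r (-(0:ℂ)) := by
      rw [neg_zero]; exact hr
    exact AnalyticAt.comp' (f := fun z : ℂ => -z) this (by fun_prop)
  obtain ⟨C, hC⟩ := punct_const hω (h := fun z => f z + f (-z)) (r := fun z => r z + r (-z))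
    (by
      intro z hz
      have hz' : -z ∈ (LatS ω)ᶜ := fun h => hz (LatS_neg.mp h)
      have d1 : DifferentiableAt ℂ f z := hd.differentiableAt (hopen.mem_nhds hz)
      have d2 : DifferentiableAt ℂ (fun z : ℂ => f (-z)) z :=
        DifferentiableAt.comp (g := f) (f := fun z : ℂ => -z) z
          (hd.differentiableAt (hopen.mem_nhds hz')) (by fun_prop)
      exact (d1.add d2).differentiableWithinAt)
    (by
      intro z hz
      have hz' : -(z+1) ∉ LatS ω := by rwa [LatS_neg, LatS_add1]
      have := h1 _ hz'
      rw [h1 z hz, ← this]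
      congr 2; ring)
    (by
      intro z hz
      have hz' : -(z+ω) ∉ LatS ω := by rwa [LatS_neg, LatS_addω]
      have := h2 _ hz'
      rw [h2 z hz, ← this]
      congr 2; ring)
    hL (hr.add hrn)
    (by
      filter_upwards [hfr, tn.eventually hfr] with z hz hz'
      rw [hz, hz', div_neg]; ring)
  refine odd_case hω (f := fun z => f z - C/2) (r := fun z => r z - C/2) (a := a)
    (hd.sub_const _) ?_ ?_ hL (hr.sub analyticAt_const) ?_ ?_
  · intro z hz; simp only [h1 z hz]
  · intro z hz; simp only [h2 z hz]
  · filter_upwards [hfr] with z hz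
    rw [hz]; ring
  · intro z hz
    have := hC z hz

    linear_combination this

/-- Linear independence of the cochain classes in `H¹(Sₙ, ∧²Θ)`: if a doubly
periodic function `f`, holomorphic off the lattice `L`, is such that
`f z + c₁/z + (cₙ z + cₙ₋₁ z² + ⋯ + c₂ z^{n-1})` extends holomorphically across `0`
with a zero of order at least `n`, then `f = 0` and `c₁ = ⋯ = cₙ = 0`. -/
theorem elliptic_function_coefficients_vanish
    (ω : ℂ) (hω : 0 < ω.im)
    (L : Set ℂ) (hL : L = {z : ℂ | ∃ m n : ℤ, z = (m : ℂ) + (n : ℂ) * ω})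
    (n : ℕ) (hn : 2 ≤ n)
    (f : ℂ → ℂ) (c : ℕ → ℂ)
    (hf : DifferentiableOn ℂ f Lᶜ)
    (hper : ∀ z ∉ L, f (z + 1) = f z ∧ f (z + ω) = f z)
    (hext : ∃ ε > 0, (ball (0 : ℂ) ε \ {0}) ⊆ Lᶜ ∧
      ∃ g : ℂ → ℂ, DifferentiableOn ℂ g (ball (0 : ℂ) ε) ∧
        (∀ z ∈ ball (0 : ℂ) ε \ {0},
          g z = f z + c 1 / z + ∑ k ∈ Finset.Icc 1 (n - 1), c (n + 1 - k) * z ^ k) ∧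
        Tendsto (fun z => g z / z ^ (n - 1)) (nhdsWithin 0 {(0 : ℂ)}ᶜ) (nhds 0)) :
    (∀ z ∉ L, f z = 0) ∧ ∀ k ∈ Finset.Icc 1 n, c k = 0 := by
  have hLL : L = LatS ω := hL
  clear hL
  subst hLL
  obtain ⟨ε, hε, hball, g, hg, hgf, hlim⟩ := hext
  have hpunct : ball (0:ℂ) ε \ {0} ∈ nhdsWithin (0:ℂ) {0}ᶜ :=
    sdiff_mem_nhdsWithin_compl (ball_mem_nhds 0 hε) _
  have hLat : ∀ᶠ z in nhdsWithin (0:ℂ) {0}ᶜ, z ∉ LatS ω := by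
    filter_upwards [hpunct] with z hz using hball hz
  have hgA : AnalyticAt ℂ g 0 := hg.analyticAt (ball_mem_nhds 0 hε)
  have hr : AnalyticAt ℂ
      (fun z => g z - ∑ k ∈ Finset.Icc 1 (n - 1), c (n + 1 - k) * z ^ k) 0 := by
    refine hgA.sub ?_
    fun_prop
  have hc1 : - c 1 = 0 := by
    refine res_zero hω hf (fun z hz => (hper z hz).1) (fun z hz => (hper z hz).2) hLat hr ?_
    filter_upwards [hpunct] with z hz
    rw [hgf z hz]; ring
  have hc1 : c 1 = 0 := by simpa using hc1
  obtain ⟨C, hC⟩ := punct_const hω hf (fun z hz => (hper z hz).1) (fun z hz => (hper z hz).2)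
    hLat hr (by
      filter_upwards [hpunct] with z hz
      rw [hgf z hz, hc1]; ring)
  set p : Polynomial ℂ := Polynomial.C C +
    ∑ k ∈ Finset.Icc 1 (n - 1), Polynomial.C (c (n + 1 - k)) * Polynomial.X ^ k with hp
  have hp0 : p = 0 := by
    refine aux_poly p (n - 1) ?_ ?_
    · refine Polynomial.natDegree_add_le_of_degree_le (by simp) ?_
      refine Polynomial.natDegree_sum_le_of_forall_le _ _ ?_
      intro k hk
      exact (Polynomial.natDegree_C_mul_X_pow_le _ _).trans (Finset.mem_Icc.mp hk).2
    · refine hlim.congr' ?_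
      filter_upwards [hpunct] with z hz
      rw [hgf z hz, hc1, hC z (hball hz), hp]
      simp [Polynomial.eval_finset_sum]
  have hcoef : ∀ j, p.coeff j = 0 := by intro j; rw [hp0]; simp
  constructor
  · intro z hz
    rw [hC z hz]
    have h := hcoef 0
    rw [hp, Polynomial.coeff_add, Polynomial.finset_sum_coeff, Finset.sum_eq_zero] at h
    · simpa using h
    · intro k hk
      have := (Finset.mem_Icc.mp hk).1
      rw [Polynomial.coeff_C_mul_X_pow, if_neg (by omega)]
  · intro k hk
    obtain ⟨hk1, hk2⟩ := Finset.mem_Icc.mp hk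
    by_cases h1 : k = 1
    · rw [h1, hc1]
    have h := hcoef (n + 1 - k)
    rw [hp, Polynomial.coeff_add, Polynomial.finset_sum_coeff,
      Finset.sum_eq_single (n + 1 - k), Polynomial.coeff_C_ne_zero (by omega),
      Polynomial.coeff_C_mul_X_pow, if_pos rfl, zero_add,
      show n + 1 - (n + 1 - k) = k by omega] at h
    · exact h
    · intro b _ hb
      rw [Polynomial.coeff_C_mul_X_pow, if_neg (fun h => hb h.symm)]
    · intro hb
      exact absurd (Finset.mem_Icc.mpr ⟨by omega, by omega⟩) hb
end

section
/- Let (A, B, C) ∈ ℂ³ with (A, B, C) ≠ (0, 0, 0). The ℂ-linear map T : ℂ⁴ → ℂ³ defined by T(t₀, t₁, t₂, t₃) = (A·t₂ − B·t₁, 2·(A·t₃ − C·t₁), B·t₃ − C·t₂) has kernel of dimension 2 and range of dimension 2. (This linear map is the bracket map [Λ₀, −] : H⁰(S, Θ_S) → H⁰(S, ∧²Θ_S) for the Poisson structure Λ₀ = (A + Bξ + Cξ²)·∂/∂ξ ∧ ∂/∂u on S₀ = X × ℙ¹, expressed in the bases ∂/∂u, ∂/∂ξ, ξ·∂/∂ξ,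 ξ²·∂/∂ξ and ∂/∂ξ∧∂/∂u, ξ·∂/∂ξ∧∂/∂u, ξ²·∂/∂ξ∧∂/∂u; the kernel dimension 2 is dim ℍ⁰(S₀, Θ^•) and the cokernel dimension 1 is dim ℍ²(S₀, Θ^•).) -/
/-- The bracket map `[Λ₀, −] : H⁰(S₀, Θ) → H⁰(S₀, ∧²Θ)` for
`Λ₀ = (A + Bξ + Cξ²)·∂/∂ξ ∧ ∂/∂u` on `S₀ = X × ℙ¹` has kernel of dimension 2 and
range of dimension 2 when `(A, B, C) ≠ (0, 0, 0)`. -/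
theorem bracket_map_S0_rank
    (A B C : ℂ) (hABC : (A, B, C) ≠ (0, 0, 0))
    (T : (Fin 4 → ℂ) →ₗ[ℂ] (Fin 3 → ℂ))
    (hT : ∀ t : Fin 4 → ℂ,
      T t = ![A * t 2 - B * t 1, 2 * (A * t 3 - C * t 1), B * t 3 - C * t 2]) :
    Module.finrank ℂ ↥(LinearMap.ker T) = 2 ∧
    Module.finrank ℂ ↥(LinearMap.range T) = 2 := by
  have hker : LinearMap.ker T =
      Submodule.span ℂ (Set.range ![(![1, 0, 0, 0] : Fin 4 → ℂ), ![0, A, B, C]]) := by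
    ext t
    rw [LinearMap.mem_ker, hT, Matrix.range_cons, Matrix.range_cons, Matrix.range_empty,
      Set.union_empty, Set.singleton_union, Submodule.mem_span_pair]
    constructor
    · intro h
      have h0 := congrFun h 0
      have h1 := congrFun h 1
      have h2 := congrFun h 2
      simp at h0 h1 h2
      have key : ∃ c : ℂ, c * A = t 1 ∧ c * B = t 2 ∧ c * C = t 3 := by
        by_cases hA : A = 0
        · by_cases hB : B = 0
          · have hC : C ≠ 0 := by
              rintro rfl
              exact hABC (by rw [hA, hB])
            refine ⟨t 3 / C, ?_, ?_, ?_⟩ <;> field_simp <;> grind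
          · refine ⟨t 2 / B, ?_, ?_, ?_⟩ <;> field_simp <;> grind
        · refine ⟨t 1 / A, ?_, ?_, ?_⟩ <;> field_simp <;> grind
      obtain ⟨c, c1, c2, c3⟩ := key
      refine ⟨t 0, c, ?_⟩
      ext i
      fin_cases i <;> simp [c1, c2, c3]
    · rintro ⟨a, b, rfl⟩
      ext i
      fin_cases i <;> simp <;> ring_nf <;> simp
  have hli : LinearIndependent ℂ ![(![1, 0, 0, 0] : Fin 4 → ℂ), ![0, A, B, C]] := by
    rw [LinearIndependent.pair_iff]
    intro a b h
    have h0 := congrFun h 0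
    have h1 := congrFun h 1
    have h2 := congrFun h 2
    have h3 := congrFun h 3
    simp at h0 h1 h2 h3
    refine ⟨h0, ?_⟩
    by_contra hb
    exact hABC (by simp_all)
  have hk : Module.finrank ℂ ↥(LinearMap.ker T) = 2 := by
    rw [hker, finrank_span_eq_card hli]
    simp
  have hrn := LinearMap.finrank_range_add_finrank_ker T
  rw [hk, Module.finrank_fin_fun] at hrn
  exact ⟨hk, by omega⟩
end
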